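/- arXiv:2002.09363 — 6 statements merged into one kernel-verified Lean document; each statement's English description precedes it below -/
import Mathlib

section
/- Norm bound for the boundary-law operator T (Lemma 5.2 / lem:ineq): Assume ‖Q‖_{(d+1)/2,ℤ^k} < ∞. Then for every x ∈ ℓ^{d+1}(ℤ^k∖{0}) with x ≥ 0 one has ‖T(x)‖_{d+1,ℤ^k∖{0}} ≤ ‖Q‖_{d+1,ℤ^k∖{0}} + ‖Q‖_{(d+1)/2,ℤ^k} · ‖x‖_{d+1,ℤ^k∖{0}}^d < ∞; in particular T maps ℓ^{d+1}(ℤ^k∖{0}) nonnegative elements into ℓ^{d+1}(ℤ^k∖{0}). -/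
/-!
The denominator of `T(x)(i)` is at least `1`, so `T(x)` is dominated pointwise by
`Q + Q ∗ x^d` (`abs_opT_le`). Minkowski's inequality in `ℓ^{d+1}` leaves the term `‖Q‖_{d+1}`, which
is finite because `ℓ^{(d+1)/2} ⊆ ℓ^{d+1}`, and the norm of the convolution. The latter is bounded by
Young's inequality with exponents `(d+1)/2` for `Q` and `(d+1)/d` for `x^d` (`young_tsum`), which is
derived from a three-factor Hölder inequality (`young_pointwise`) by summing over `i` and
exchanging the sums; the rows and columns of the kernel `Q(i - j)` are injective reindexings of `Q`.

The inequalities are carried out in `ℝ≥0∞`, where sums need no convergence hypotheses; finiteness of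
the final bound then yields both the summability and the real inequality.
-/


open scoped BigOperators
open Filter Topology

noncomputable section

/-- The integer lattice `ℤ^k`. -/
abbrev ZkL (k : ℕ) := Fin k → ℤ

/-- The punctured integer lattice `ℤ^k ∖ {0}`, as a subtype. -/
abbrev ZkP (k : ℕ) := {j : ZkL k // j ≠ 0}

/-- The `p`-norm `‖x‖_{p, ℤ^k}` of a function on all of `ℤ^k`. -/
noncomputable def normFull (k : ℕ) (p : ℝ) (x : ZkL k → ℝ) : ℝ :=
  (∑' j : ZkL k, |x j| ^ p) ^ (1 / p)

/-- The `p`-norm `‖x‖_{p, ℤ^k ∖ {0}}` of a function on `ℤ^k`, restricted to nonzero sites. -/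
noncomputable def normPunct (k : ℕ) (p : ℝ) (x : ZkL k → ℝ) : ℝ :=
  (∑' j : ZkP k, |x j.1| ^ p) ^ (1 / p)

/-- The `p`-norm of a function defined on `ℤ^k ∖ {0}`. -/
noncomputable def norm0 (k : ℕ) (p : ℝ) (x : ZkP k → ℝ) : ℝ :=
  (∑' j : ZkP k, |x j| ^ p) ^ (1 / p)

/-- `γ := ‖Q‖_{(d+1)/2, ℤ^k}`. -/
noncomputable def gam (k d : ℕ) (Q : ZkL k → ℝ) : ℝ := normFull k (((d : ℝ) + 1) / 2) Q

/-- `δ := ‖Q‖_{d+1, ℤ^k ∖ {0}}`. -/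
noncomputable def del (k d : ℕ) (Q : ZkL k → ℝ) : ℝ := normPunct k ((d : ℝ) + 1) Q

/-- Membership in `D`: an element of `ℓ^{d+1}(ℤ^k ∖ {0})` with nonnegative entries. -/
def memD (k d : ℕ) (x : ZkP k → ℝ) : Prop :=
  Summable (fun j : ZkP k => |x j| ^ ((d : ℝ) + 1)) ∧ ∀ j : ZkP k, 0 ≤ x j

/-- The operator `T`:
`T(x)(i) = (Q(i) + Σ_{j≠0} Q(i−j) x(j)^d) / (1 + Σ_{j≠0} Q(j) x(j)^d)`. -/
noncomputable def opT (k d : ℕ) (Q : ZkL k → ℝ) (x : ZkP k → ℝ) (i : ZkL k) : ℝ :=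
  (Q i + ∑' j : ZkP k, Q (i - j.1) * x j ^ d) /
  (1 + ∑' j : ZkP k, Q j.1 * x j ^ d)

/-- The good set `G_d`. -/
def goodSet (d : ℕ) : Set (ℝ × ℝ) :=
  {gd | 1 < gd.1 ∧ 0 < gd.2 ∧ ∃ ε > 0,
    gd.2 + gd.1 * ε ^ d ≤ ε ∧
    2 * d * gd.1 * ε ^ (d - 1) + 2 * d * gd.2 * ε ^ d < 1}

open scoped ENNReal
open MeasureTheory

/-- Hölder's inequality for three sequences, with weights `u + v + w = 1`. -/
theorem holder_three {κ : Type*} (f g h : κ → ℝ≥0∞) (u v w : ℝ) (hu : 0 ≤ u) (hv : 0 ≤ v)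
    (hw : 0 ≤ w) (huvw : u + v + w = 1) :
    ∑' j, f j ^ u * g j ^ v * h j ^ w ≤
      (∑' j, f j) ^ u * (∑' j, g j) ^ v * (∑' j, h j) ^ w := by
  let _ : MeasurableSpace κ := ⊤
  have := ENNReal.lintegral_prod_norm_pow_le (μ := Measure.count (α := κ)) Finset.univ
    (f := ![f, g, h]) (fun i _ => measurable_from_top.aemeasurable) (p := ![u, v, w])
    (by simpa [Fin.sum_univ_three] using huvw)
    (by intro i _; fin_cases i <;> simpa)
  simpa [Fin.prod_univ_three, lintegral_count] using this

/-- Minkowski's inequality for `ℝ≥0∞`-valued sums, with no summability assumption. -/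
theorem minkowski_tsum {ι : Type*} (f g : ι → ℝ≥0∞) {p : ℝ} (hp : 1 ≤ p) :
    (∑' i, (f i + g i) ^ p) ^ (1 / p) ≤
      (∑' i, f i ^ p) ^ (1 / p) + (∑' i, g i ^ p) ^ (1 / p) := by
  let _ : MeasurableSpace ι := ⊤
  simpa [lintegral_count] using ENNReal.lintegral_Lp_add_le (μ := Measure.count (α := ι))
    (f := f) (g := g) measurable_from_top.aemeasurable measurable_from_top.aemeasurable hp

/-- The Hölder step of Young's inequality. With `p = (d+1)/2` and `r = d+1`, the splitting
`a b^d = (a^p b^r)^{1/r} · (a^p)^{1/r} · (b^r)^{(d-1)/r}` has weights summing to `1`. -/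
theorem young_pointwise {κ : Type*} (d : ℕ) (hd : 1 ≤ d) (a b : κ → ℝ≥0∞) :
    (∑' j, a j * b j ^ d) ^ ((d : ℝ) + 1) ≤
      (∑' j, a j ^ (((d : ℝ) + 1) / 2) * b j ^ ((d : ℝ) + 1)) *
        (∑' j, a j ^ (((d : ℝ) + 1) / 2)) * (∑' j, b j ^ ((d : ℝ) + 1)) ^ ((d : ℝ) - 1) := by
  have hd' : (1 : ℝ) ≤ d := by exact_mod_cast hd
  have hr : (0 : ℝ) < (d : ℝ) + 1 := by positivity
  have h := holder_three (fun j => a j ^ (((d : ℝ) + 1) / 2) * b j ^ ((d : ℝ) + 1))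
    (fun j => a j ^ (((d : ℝ) + 1) / 2)) (fun j => b j ^ ((d : ℝ) + 1))
    (1 / ((d : ℝ) + 1)) (1 / ((d : ℝ) + 1)) (((d : ℝ) - 1) / ((d : ℝ) + 1))
    (by positivity) (by positivity) (div_nonneg (by linarith) hr.le) (by field_simp; ring)
  have e : ∀ j, (a j ^ (((d : ℝ) + 1) / 2) * b j ^ ((d : ℝ) + 1)) ^ (1 / ((d : ℝ) + 1)) *
      (a j ^ (((d : ℝ) + 1) / 2)) ^ (1 / ((d : ℝ) + 1)) *
      (b j ^ ((d : ℝ) + 1)) ^ (((d : ℝ) - 1) / ((d : ℝ) + 1)) = a j * b j ^ d := by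
    intro j
    have e1 : ((d : ℝ) + 1) / 2 * (1 / ((d : ℝ) + 1)) = 1 / 2 := by field_simp
    have e2 : ((d : ℝ) + 1) * (1 / ((d : ℝ) + 1)) = 1 := by field_simp
    have e3 : ((d : ℝ) + 1) * (((d : ℝ) - 1) / ((d : ℝ) + 1)) = d - 1 := by field_simp
    rw [ENNReal.mul_rpow_of_nonneg _ _ (by positivity)]
    simp only [← ENNReal.rpow_mul]
    rw [e1, e2, e3]
    calc _ = (a j ^ (1 / 2 : ℝ) * a j ^ (1 / 2 : ℝ)) * (b j ^ (1 : ℝ) * b j ^ ((d : ℝ) - 1)) := by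
          ring
      _ = _ := by
          rw [← ENNReal.rpow_add_of_nonneg _ _ (by norm_num) (by norm_num),
            ← ENNReal.rpow_add_of_nonneg _ _ (by norm_num) (by linarith)]
          norm_num
  simp only [e] at h
  refine (ENNReal.rpow_le_rpow h hr.le).trans_eq ?_
  rw [ENNReal.mul_rpow_of_nonneg _ _ hr.le, ENNReal.mul_rpow_of_nonneg _ _ hr.le]
  simp only [← ENNReal.rpow_mul]
  rw [one_div_mul_cancel hr.ne', div_mul_cancel₀ _ hr.ne', ENNReal.rpow_one, ENNReal.rpow_one]

/-- Young's (Schur-type) inequality for the kernel `a` with exponents `1/p + d/(d+1) = 1 + 1/(d+1)`,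
`p = (d+1)/2`: the row and column sums of `a^p` being at most `A`, the map
`b ↦ Σ_j a(·,j) b(j)^d` is bounded in `ℓ^{d+1}` by `A^{1/p} ‖b‖_{d+1}^d`. -/
theorem young_tsum {ι κ : Type*} (d : ℕ) (hd : 1 ≤ d) (a : ι → κ → ℝ≥0∞) (b : κ → ℝ≥0∞)
    (A : ℝ≥0∞) (h₁ : ∀ i, ∑' j, a i j ^ (((d : ℝ) + 1) / 2) ≤ A)
    (h₂ : ∀ j, ∑' i, a i j ^ (((d : ℝ) + 1) / 2) ≤ A) :
    (∑' i, (∑' j, a i j * b j ^ d) ^ ((d : ℝ) + 1)) ^ (1 / ((d : ℝ) + 1)) ≤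
      A ^ (1 / (((d : ℝ) + 1) / 2)) *
        ((∑' j, b j ^ ((d : ℝ) + 1)) ^ (1 / ((d : ℝ) + 1))) ^ d := by
  have hd' : (1 : ℝ) ≤ d := by exact_mod_cast hd
  have hr : (0 : ℝ) < (d : ℝ) + 1 := by positivity
  set B := ∑' j, b j ^ ((d : ℝ) + 1) with hB
  have key : ∑' i, (∑' j, a i j * b j ^ d) ^ ((d : ℝ) + 1) ≤ A ^ (2 : ℝ) * B ^ (d : ℝ) := by
    calc _ ≤ ∑' i, (∑' j, a i j ^ (((d : ℝ) + 1) / 2) * b j ^ ((d : ℝ) + 1)) * A *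
            B ^ ((d : ℝ) - 1) := by
          refine ENNReal.tsum_le_tsum fun i => (young_pointwise d hd (a i) b).trans ?_
          gcongr
          exact h₁ i
      _ = (∑' j, (∑' i, a i j ^ (((d : ℝ) + 1) / 2)) * b j ^ ((d : ℝ) + 1)) * A *
            B ^ ((d : ℝ) - 1) := by
          rw [ENNReal.tsum_mul_right, ENNReal.tsum_mul_right, ENNReal.tsum_comm]
          simp only [ENNReal.tsum_mul_right]
      _ ≤ (∑' j, A * b j ^ ((d : ℝ) + 1)) * A * B ^ ((d : ℝ) - 1) := by
          gcongr with j
          exact h₂ j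
      _ = (A ^ (1 : ℝ) * A ^ (1 : ℝ)) * (B ^ (1 : ℝ) * B ^ ((d : ℝ) - 1)) := by
          rw [ENNReal.tsum_mul_left, ← hB, ENNReal.rpow_one, ENNReal.rpow_one]
          ring
      _ = _ := by
          rw [← ENNReal.rpow_add_of_nonneg _ _ (by norm_num) (by norm_num),
            ← ENNReal.rpow_add_of_nonneg _ _ (by norm_num) (by linarith)]
          norm_num
  refine (ENNReal.rpow_le_rpow key (by positivity)).trans_eq ?_
  rw [ENNReal.mul_rpow_of_nonneg _ _ (by positivity), ← ENNReal.rpow_natCast (B ^ _) d]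
  simp only [← ENNReal.rpow_mul]
  congr 2 <;> field_simp

/-- No summability is needed: a divergent real sum has the junk value `0`. -/
theorem ofReal_tsum_le {κ : Type*} (f : κ → ℝ) (hf : ∀ j, 0 ≤ f j) :
    ENNReal.ofReal (∑' j, f j) ≤ ∑' j, ENNReal.ofReal (f j) := by
  by_cases h : Summable f
  · exact (ENNReal.ofReal_tsum_of_nonneg hf h).le
  · simp [tsum_eq_zero_of_not_summable h]

theorem ofReal_lpNorm {κ : Type*} (f : κ → ℝ) {p : ℝ} (hp : 0 < p)
    (hs : Summable fun j => |f j| ^ p) :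
    ENNReal.ofReal ((∑' j, |f j| ^ p) ^ (1 / p)) =
      (∑' j, ENNReal.ofReal |f j| ^ p) ^ (1 / p) := by
  have h0 : ∀ j, 0 ≤ |f j| ^ p := fun j => by positivity
  rw [← ENNReal.ofReal_rpow_of_nonneg (tsum_nonneg h0) (by positivity),
    ENNReal.ofReal_tsum_of_nonneg h0 hs]
  simp only [ENNReal.ofReal_rpow_of_nonneg (abs_nonneg _) hp.le]

theorem summable_of_lpNorm_ne_top {κ : Type*} (f : κ → ℝ) {p : ℝ} (hp : 0 < p)
    (hs : (∑' j, ENNReal.ofReal |f j| ^ p) ^ (1 / p) ≠ ∞) :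
    Summable fun j => |f j| ^ p := by
  have h1 : (∑' j, ENNReal.ofReal |f j| ^ p) ≠ ∞ := fun h => hs (by
    rw [h, ENNReal.top_rpow_of_pos (by positivity)])
  refine (ENNReal.summable_toReal h1).congr fun j => ?_
  rw [ENNReal.ofReal_rpow_of_nonneg (abs_nonneg _) hp.le, ENNReal.toReal_ofReal (by positivity)]

/-- The inclusion `ℓ^{r/2} ⊆ ℓ^r`. -/
theorem summable_rpow_of_half {κ : Type*} (f : κ → ℝ) {r : ℝ} (hr : 0 < r)
    (hs : Summable fun j => |f j| ^ (r / 2)) : Summable fun j => |f j| ^ r := by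
  have h0 : ∀ j, 0 ≤ |f j| ^ (r / 2) := fun j => by positivity
  refine Summable.of_nonneg_of_le (fun j => by positivity) (fun j => ?_)
    (hs.mul_left (∑' j, |f j| ^ (r / 2)))
  calc |f j| ^ r = |f j| ^ (r / 2) * |f j| ^ (r / 2) := by
        rw [← Real.rpow_add_of_nonneg (abs_nonneg _) (by positivity) (by positivity), add_halves]
    _ ≤ _ := mul_le_mul_of_nonneg_right (hs.le_tsum j fun i _ => h0 i) (h0 j)

/-- The denominator in `T(x)(i)` is at least `1`, so `T(x)(i)` is at most its numerator, read here
in `ℝ≥0∞`. -/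
theorem abs_opT_le (k d : ℕ) (Q : ZkL k → ℝ) (hQpos : ∀ j, 0 < Q j) (x : ZkP k → ℝ)
    (hx : ∀ j, 0 ≤ x j) (i : ZkL k) :
    ENNReal.ofReal |opT k d Q x i| ≤ ENNReal.ofReal |Q i| +
      ∑' j : ZkP k, ENNReal.ofReal |Q (i - j.1)| * ENNReal.ofReal |x j| ^ d := by
  have h0 : ∀ (i : ZkL k) (j : ZkP k), 0 ≤ Q (i - j.1) * x j ^ d := fun i j =>
    mul_nonneg (hQpos _).le (pow_nonneg (hx j) d)
  have hnum : 0 ≤ Q i + ∑' j : ZkP k, Q (i - j.1) * x j ^ d :=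
    add_nonneg (hQpos i).le (tsum_nonneg (h0 i))
  have hden : 1 ≤ 1 + ∑' j : ZkP k, Q j.1 * x j ^ d :=
    le_add_of_nonneg_right (tsum_nonneg fun j => mul_nonneg (hQpos _).le (pow_nonneg (hx j) d))
  have hT : |opT k d Q x i| ≤ Q i + ∑' j : ZkP k, Q (i - j.1) * x j ^ d := by
    unfold opT
    rw [abs_of_nonneg (div_nonneg hnum (zero_le_one.trans hden))]
    exact div_le_self hnum hden
  refine (ENNReal.ofReal_le_ofReal hT).trans ?_
  rw [ENNReal.ofReal_add (hQpos i).le (tsum_nonneg (h0 i)), abs_of_pos (hQpos i)]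
  gcongr
  refine (ofReal_tsum_le _ (h0 i)).trans_eq (tsum_congr fun j => ?_)
  rw [ENNReal.ofReal_mul (hQpos _).le, ENNReal.ofReal_pow (hx j), abs_of_pos (hQpos _),
    abs_of_nonneg (hx j)]

/-- Lemma 5.2 / lem:ineq: norm bound for the boundary-law operator `T`.
If `‖Q‖_{(d+1)/2,ℤ^k} < ∞` then for every nonnegative `x ∈ ℓ^{d+1}(ℤ^k∖{0})`,
`‖T(x)‖_{d+1,ℤ^k∖{0}} ≤ ‖Q‖_{d+1,ℤ^k∖{0}} + ‖Q‖_{(d+1)/2,ℤ^k} ‖x‖_{d+1,ℤ^k∖{0}}^d < ∞`;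
in particular `T(x) ∈ ℓ^{d+1}(ℤ^k∖{0})`. -/
theorem stmt0 (k d : ℕ) (hk : 1 ≤ k) (hd : 2 ≤ d)
    (Q : ZkL k → ℝ) (hQpos : ∀ j, 0 < Q j) (hQ0 : Q 0 = 1)
    (hQsum : Summable fun j : ZkL k => |Q j| ^ (((d : ℝ) + 1) / 2))
    (x : ZkP k → ℝ) (hx : memD k d x) :
    Summable (fun j : ZkP k => |opT k d Q x j.1| ^ ((d : ℝ) + 1)) ∧
    norm0 k ((d : ℝ) + 1) (fun j : ZkP k => opT k d Q x j.1) ≤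
      del k d Q + gam k d Q * (norm0 k ((d : ℝ) + 1) x) ^ d := by
  obtain ⟨hxs, hx0⟩ := hx
  have hr : (0 : ℝ) < (d : ℝ) + 1 := by positivity
  have hQr : Summable fun j : ZkP k => |Q j.1| ^ ((d : ℝ) + 1) :=
    (summable_rpow_of_half Q hr hQsum).subtype _
  have hdel : 0 ≤ del k d Q := by unfold del normPunct; positivity
  have hgam : 0 ≤ gam k d Q := by unfold gam normFull; positivity
  have hnx : 0 ≤ norm0 k ((d : ℝ) + 1) x := by unfold norm0; positivity
  have hY := young_tsum d (by omega)
    (fun (i j : ZkP k) => ENNReal.ofReal |Q (i.1 - j.1)|) (fun j => ENNReal.ofReal |x j|)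
    (∑' j : ZkL k, ENNReal.ofReal |Q j| ^ (((d : ℝ) + 1) / 2))
    (fun i => ENNReal.tsum_comp_le_tsum_of_injective (f := fun j : ZkP k => i.1 - j.1)
      (fun _ _ h => Subtype.ext (sub_right_injective h))
      (fun j => ENNReal.ofReal |Q j| ^ (((d : ℝ) + 1) / 2)))
    (fun j => ENNReal.tsum_comp_le_tsum_of_injective (f := fun i : ZkP k => i.1 - j.1)
      (fun _ _ h => Subtype.ext (sub_left_injective h))
      (fun j => ENNReal.ofReal |Q j| ^ (((d : ℝ) + 1) / 2)))
  have hmain : (∑' i : ZkP k, ENNReal.ofReal |opT k d Q x i.1| ^ ((d : ℝ) + 1)) ^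
      (1 / ((d : ℝ) + 1)) ≤
      ENNReal.ofReal (del k d Q + gam k d Q * (norm0 k ((d : ℝ) + 1) x) ^ d) := by
    rw [ENNReal.ofReal_add hdel (by positivity), ENNReal.ofReal_mul hgam,
      ENNReal.ofReal_pow hnx]
    unfold del gam normPunct normFull norm0
    rw [ofReal_lpNorm (fun j : ZkP k => Q j.1) hr hQr, ofReal_lpNorm Q (by positivity) hQsum,
      ofReal_lpNorm x hr hxs]
    refine le_trans ?_ ((minkowski_tsum _ _ (by linarith)).trans (add_le_add_right hY _))
    gcongr with i
    exact abs_opT_le k d Q hQpos x hx0 i.1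
  have hs := summable_of_lpNorm_ne_top (fun i : ZkP k => opT k d Q x i.1) hr
    (ne_top_of_le_ne_top ENNReal.ofReal_ne_top hmain)
  refine ⟨hs, ?_⟩
  rw [← ofReal_lpNorm (fun i : ZkP k => opT k d Q x i.1) hr hs] at hmain
  exact (ENNReal.ofReal_le_ofReal_iff (by positivity)).1 hmain
end
end

section
/- Pointwise Lipschitz estimate for T (Lemma lem:Lipschitz): Assume ‖Q‖_{(d+1)/2,ℤ^k} < ∞. For all x, y ∈ D and every i ∈ ℤ^k∖{0}, |T(x)(i) − T(y)(i)| ≤ Σ_{j∈ℤ^k∖{0}} Q(i−j) |x(j)^d − y(j)^d| + (Σ_{l∈ℤ^k∖{0}} Q(l) |x(l)^d − y(l)^d|) · (Q(i) + Σ_{j∈ℤ^k∖{0}} Q(i−j) y(j)^d). -/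
/-!
Writing `T(x)(i) = a/A` and `T(y)(i) = b/B`, both denominators are at least `1`, and
`a/A - b/B = (a - b)/A + b (B - A)/(A B)` gives `|a/A - b/B| ≤ |a - b| + |A - B| b`
(`abs_div_sub_div_le`). The two differences are bounded termwise (`abs_tsum_mul_sub_le`) once
all the series converge. Convergence (`memD.summable_mul_pow`) follows from
`q x^d ≤ q^{d+1} + x^{d+1}` together with `Q ∈ ℓ^{(d+1)/2} ⊆ ℓ^{d+1}`
(`summable_pow_succ_of_half`); translation `j ↦ i - j` and restriction to nonzero sites preserve
the latter.
-/

open scoped BigOperators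
open Filter Topology

noncomputable section

/-- Young-type bound with a crude constant; it holds because both factors are at most
`max a b`. -/
lemma mul_pow_le_pow_succ_add (d : ℕ) {a b : ℝ} (ha : 0 ≤ a) (hb : 0 ≤ b) :
    a * b ^ d ≤ a ^ (d + 1) + b ^ (d + 1) := by
  have ha' : 0 ≤ a ^ (d + 1) := by positivity
  have hb' : 0 ≤ b ^ (d + 1) := by positivity
  rcases le_total a b with h | h
  · have h1 : a * b ^ d ≤ b * b ^ d := by gcongr
    rw [pow_succ'] at hb' ⊢
    rw [pow_succ' b]
    rw [pow_succ'] at ha'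
    linarith
  · have h1 : a * b ^ d ≤ a * a ^ d := by gcongr
    rw [pow_succ', pow_succ' b]
    rw [pow_succ'] at ha' hb'
    linarith

/-- The inclusion `ℓ^{(d+1)/2} ⊆ ℓ^{d+1}` for positive functions: a summable nonnegative
family is bounded by its sum, so its squares are summable. -/
lemma summable_pow_succ_of_half {ι : Type*} (d : ℕ) {Q : ι → ℝ} (hQ : ∀ j, 0 < Q j)
    (h : Summable fun j => |Q j| ^ (((d : ℝ) + 1) / 2)) :
    Summable fun j => Q j ^ (d + 1) := by
  have hnn : ∀ j, 0 ≤ |Q j| ^ (((d : ℝ) + 1) / 2) := fun j => by positivity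
  refine Summable.of_nonneg_of_le (fun j => by have := hQ j; positivity) (fun j => ?_)
    (h.mul_left (∑' j, |Q j| ^ (((d : ℝ) + 1) / 2)))
  have hsq : Q j ^ (d + 1) = |Q j| ^ (((d : ℝ) + 1) / 2) * |Q j| ^ (((d : ℝ) + 1) / 2) := by
    rw [abs_of_pos (hQ j), ← Real.rpow_add (hQ j), ← Real.rpow_natCast]
    congr 1
    push_cast
    ring
  rw [hsq]
  exact mul_le_mul_of_nonneg_right (h.le_tsum j fun l _ => hnn l) (hnn j)

/-- For `x ∈ D`, every series `Σ q(j) x(j)^d` with `q ≥ 0` in `ℓ^{d+1}` converges. -/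
lemma memD.summable_mul_pow {k d : ℕ} {x : ZkP k → ℝ} (hx : memD k d x) {q : ZkP k → ℝ}
    (hq : ∀ j, 0 ≤ q j) (hqs : Summable fun j => q j ^ (d + 1)) :
    Summable fun j => q j * x j ^ d := by
  have hxs : Summable fun j => x j ^ (d + 1) := by
    refine hx.1.congr fun j => ?_
    rw [abs_of_nonneg (hx.2 j), ← Real.rpow_natCast]
    push_cast
    rfl
  exact Summable.of_nonneg_of_le (fun j => mul_nonneg (hq j) (pow_nonneg (hx.2 j) d))
    (fun j => mul_pow_le_pow_succ_add d (hq j) (hx.2 j)) (hqs.add hxs)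

lemma abs_tsum_mul_sub_le {ι : Type*} {q u v : ι → ℝ} (hq : ∀ j, 0 ≤ q j)
    (hu : Summable fun j => q j * u j) (hv : Summable fun j => q j * v j) :
    |∑' j, q j * u j - ∑' j, q j * v j| ≤ ∑' j, q j * |u j - v j| := by
  have habs : ∀ j, |q j * u j - q j * v j| = q j * |u j - v j| := fun j => by
    rw [← mul_sub, abs_mul, abs_of_nonneg (hq j)]
  have hs : Summable fun j => ‖q j * u j - q j * v j‖ := (hu.sub hv).norm
  rw [← hu.tsum_sub hv]
  refine (norm_tsum_le_tsum_norm hs).trans_eq (tsum_congr habs)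

/-- Elementary quotient estimate with denominators at least `1`, from
`a/A - b/B = (a - b)/A + b (B - A)/(A B)`. -/
lemma abs_div_sub_div_le {a b A B s t : ℝ} (hA : 1 ≤ A) (hB : 1 ≤ B) (hb : 0 ≤ b)
    (hs : |a - b| ≤ s) (ht : |A - B| ≤ t) : |a / A - b / B| ≤ s + t * b := by
  have hA0 : 0 < A := by linarith
  have hB0 : 0 < B := by linarith
  have hAB : 1 ≤ A * B := one_le_mul_of_one_le_of_one_le hA hB
  have key : a / A - b / B = (a - b) / A + (B - A) * b / (A * B) := by
    field_simp
    ring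
  rw [key]
  refine (abs_add_le _ _).trans (add_le_add ?_ ?_)
  · rw [abs_div, abs_of_pos hA0]
    exact (div_le_self (abs_nonneg _) hA).trans hs
  · rw [abs_div, abs_of_pos (mul_pos hA0 hB0), abs_mul, abs_of_nonneg hb, abs_sub_comm]
    exact (div_le_self (by positivity) hAB).trans (by gcongr)

/-- Lemma lem:Lipschitz: pointwise Lipschitz estimate for `T`.
For `x, y ∈ D` and every `i ∈ ℤ^k ∖ {0}`,
`|T(x)(i) − T(y)(i)| ≤ Σ_{j≠0} Q(i−j)|x(j)^d − y(j)^d|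
  + (Σ_{l≠0} Q(l)|x(l)^d − y(l)^d|)(Q(i) + Σ_{j≠0} Q(i−j) y(j)^d)`. -/
theorem stmt1 (k d : ℕ) (hk : 1 ≤ k) (hd : 2 ≤ d)
    (Q : ZkL k → ℝ) (hQpos : ∀ j, 0 < Q j) (hQ0 : Q 0 = 1)
    (hQsum : Summable fun j : ZkL k => |Q j| ^ (((d : ℝ) + 1) / 2))
    (x y : ZkP k → ℝ) (hx : memD k d x) (hy : memD k d y)
    (i : ZkL k) (hi : i ≠ 0) :
    |opT k d Q x i - opT k d Q y i| ≤
      (∑' j : ZkP k, Q (i - j.1) * |x j ^ d - y j ^ d|) +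
      (∑' l : ZkP k, Q l.1 * |x l ^ d - y l ^ d|) *
        (Q i + ∑' j : ZkP k, Q (i - j.1) * y j ^ d) := by
  have hQs := summable_pow_succ_of_half d hQpos hQsum
  have hq1 : Summable fun j : ZkP k => Q j.1 ^ (d + 1) :=
    hQs.comp_injective Subtype.val_injective
  have hq2 : Summable fun j : ZkP k => Q (i - j.1) ^ (d + 1) :=
    hQs.comp_injective (i := fun j : ZkP k => i - j.1)
      (sub_right_injective.comp Subtype.val_injective)
  have hn1 : ∀ j : ZkP k, 0 ≤ Q j.1 := fun j => (hQpos _).le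
  have hn2 : ∀ j : ZkP k, 0 ≤ Q (i - j.1) := fun j => (hQpos _).le
  have hden : ∀ z : ZkP k → ℝ, memD k d z → 1 ≤ 1 + ∑' j : ZkP k, Q j.1 * z j ^ d :=
    fun z hz => le_add_of_nonneg_right
      (tsum_nonneg fun j => mul_nonneg (hn1 j) (pow_nonneg (hz.2 j) d))
  refine abs_div_sub_div_le (hden x hx) (hden y hy) ?_ ?_ ?_
  · exact add_nonneg (hQpos i).le
      (tsum_nonneg fun j => mul_nonneg (hn2 j) (pow_nonneg (hy.2 j) d))
  · rw [add_sub_add_left_eq_sub]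
    exact abs_tsum_mul_sub_le hn2 (hx.summable_mul_pow hn2 hq2) (hy.summable_mul_pow hn2 hq2)
  · rw [add_sub_add_left_eq_sub]
    exact abs_tsum_mul_sub_le hn1 (hx.summable_mul_pow hn1 hq1) (hy.summable_mul_pow hn1 hq1)
end
end

section
/- Lipschitz continuity of T on the invariant ball (Proposition 2.8, part 2): Set γ := ‖Q‖_{(d+1)/2,ℤ^k} and δ := ‖Q‖_{d+1,ℤ^k∖{0}}, assumed finite. If ε > 0 satisfies δ + γ ε^d ≤ ε, then for all x, y ∈ D with ‖x‖_{d+1,ℤ^k∖{0}} ≤ ε and ‖y‖_{d+1,ℤ^k∖{0}} ≤ ε one has ‖T(x) − T(y)‖_{d+1,ℤ^k∖{0}} ≤ 2d (γ ε^{d−1} + δ ε^d) · ‖x − y‖_{d+1,ℤ^k∖{0}}. -/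
/-!
With `p = d + 1`, write `T z = N_z / M_z`, where `M_z ≥ 1`. The identity
`T x - T y = (N_x - N_y) / M_x - T y * (M_x - M_y) / M_x` bounds `|T x - T y|` pointwise by
`|Q| * |x^d - y^d|` (a convolution) plus `|T y|` times the constant `∑ Q |x^d - y^d|`.

* Young's inequality (`young`) bounds the `ℓ^p` norm of the convolution by `γ ‖x^d - y^d‖_{p/d}`.
* Hölder's inequality (`tsum_mul_le_lnorm`) bounds the constant by `δ ‖x^d - y^d‖_{p/d}`.
* The ball is invariant, as `‖T y‖ ≤ δ + γ ε^d ≤ ε`.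
* From `|x^d - y^d| ≤ d |x - y| max(x, y)^{d-1}`, Hölder (`lnorm_mul_pow_le`), and
  `‖max(x, y)‖^p ≤ ‖x‖^p + ‖y‖^p ≤ 2 ε^p` one gets
  `‖x^d - y^d‖_{p/d} ≤ d 2^{(d-1)/(d+1)} ε^{d-1} ‖x - y‖ ≤ 2 d ε^{d-1} ‖x - y‖`.

All norms are handled as extended nonnegative sums (`lnorm`), so that summability only has to be
discussed when passing to and from the reals.
-/

open scoped BigOperators
open Filter Topology

noncomputable section

open scoped ENNReal

/-! ### Extended `ℓ^p` norms, Minkowski and Hölder -/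

/-- The `ℓ^p` norm of an extended-nonnegative-valued family, with value `∞` when the sum diverges. -/
def lnorm {α : Type*} (p : ℝ) (f : α → ℝ≥0∞) : ℝ≥0∞ := (∑' j, f j ^ p) ^ (1 / p)

section General

variable {α : Type*}

lemma lnorm_mono {p : ℝ} (hp : 0 ≤ p) {f g : α → ℝ≥0∞} (h : ∀ j, f j ≤ g j) :
    lnorm p f ≤ lnorm p g := by
  unfold lnorm
  have : 0 ≤ 1 / p := by positivity
  gcongr with j
  exact h j

lemma lnorm_add_le {p : ℝ} (hp : 1 ≤ p) (f g : α → ℝ≥0∞) :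
    lnorm p (fun j => f j + g j) ≤ lnorm p f + lnorm p g := by
  let _ : MeasurableSpace α := ⊤
  have := ENNReal.lintegral_Lp_add_le (μ := MeasureTheory.Measure.count) (f := f) (g := g)
    measurable_from_top.aemeasurable measurable_from_top.aemeasurable hp
  simpa only [lnorm, MeasureTheory.lintegral_count, Pi.add_apply] using this

lemma lnorm_mul_const {p : ℝ} (hp : 0 < p) (f : α → ℝ≥0∞) (c : ℝ≥0∞) :
    lnorm p (fun j => f j * c) = lnorm p f * c := by
  unfold lnorm
  have h1 : 0 ≤ 1 / p := by positivity
  simp only [ENNReal.mul_rpow_of_nonneg _ _ hp.le, ENNReal.tsum_mul_right]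
  rw [ENNReal.mul_rpow_of_nonneg _ _ h1, ← ENNReal.rpow_mul, mul_one_div_cancel hp.ne',
    ENNReal.rpow_one]

lemma le_lnorm {p : ℝ} (hp : 0 < p) (f : α → ℝ≥0∞) (j : α) : f j ≤ lnorm p f := by
  have h1 : 0 ≤ 1 / p := by positivity
  calc f j = (f j ^ p) ^ (1 / p) := by
        rw [← ENNReal.rpow_mul, mul_one_div_cancel hp.ne', ENNReal.rpow_one]
    _ ≤ lnorm p f := by
        unfold lnorm
        gcongr
        exact ENNReal.le_tsum j

lemma lnorm_rpow {p : ℝ} (hp : 0 < p) (f : α → ℝ≥0∞) : lnorm p f ^ p = ∑' j, f j ^ p := by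
  rw [lnorm, ← ENNReal.rpow_mul, one_div_mul_cancel hp.ne', ENNReal.rpow_one]

/-- The real `p`-norm is the `toReal` of the extended one, also when the sum diverges:
both sides are then `0`. -/
lemma toReal_lnorm {p : ℝ} (hp : 0 < p) (x : α → ℝ) :
    (lnorm p (fun j => ‖x j‖ₑ)).toReal = (∑' j, |x j| ^ p) ^ (1 / p) := by
  rw [lnorm, ← ENNReal.toReal_rpow, ENNReal.tsum_toReal_eq]
  · simp [← ENNReal.toReal_rpow]
  · intro j
    exact ENNReal.rpow_ne_top_of_nonneg hp.le enorm_ne_top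

lemma lnorm_ne_top {p : ℝ} (hp : 0 < p) {x : α → ℝ} (h : Summable fun j => |x j| ^ p) :
    lnorm p (fun j => ‖x j‖ₑ) ≠ ∞ := by
  refine ENNReal.rpow_ne_top_of_nonneg (by positivity) ?_
  have : ∀ j, ‖x j‖ₑ ^ p = ENNReal.ofReal (|x j| ^ p) := fun j => by
    rw [Real.enorm_eq_ofReal_abs, ENNReal.ofReal_rpow_of_nonneg (abs_nonneg _) hp.le]
  simp_rw [this]
  exact h.tsum_ofReal_ne_top

/-- Hölder's inequality with exponents `d + 1` and `(d + 1) / d`. -/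
lemma tsum_mul_le_lnorm {d : ℝ} (hd : 1 ≤ d) (f g : α → ℝ≥0∞) :
    ∑' j, f j * g j ≤ lnorm (d + 1) f * lnorm ((d + 1) / d) g := by
  let _ : MeasurableSpace α := ⊤
  have hc : (d + 1).HolderConjugate ((d + 1) / d) := by
    rw [Real.holderConjugate_iff]
    refine ⟨by linarith, ?_⟩
    field_simp
    ring
  have := ENNReal.lintegral_mul_le_Lp_mul_Lq MeasureTheory.Measure.count hc (f := f) (g := g)
    measurable_from_top.aemeasurable measurable_from_top.aemeasurable
  simpa only [lnorm, MeasureTheory.lintegral_count, Pi.mul_apply] using this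

lemma lnorm_pow {d : ℕ} (hd : 1 ≤ d) (f : α → ℝ≥0∞) :
    lnorm (((d : ℝ) + 1) / d) (fun j => f j ^ d) = lnorm ((d : ℝ) + 1) f ^ d := by
  have hd' : (0 : ℝ) < d := by exact_mod_cast hd
  unfold lnorm
  simp only [← ENNReal.rpow_natCast, ← ENNReal.rpow_mul]
  congr 1
  · congr 1; ext j; congr 1; field_simp
  · field_simp

/-- Hölder's inequality for a product of one factor with the `(d - 1)`-st power of another. -/
lemma lnorm_mul_pow_le {d : ℕ} (hd : 1 ≤ d) (f g : α → ℝ≥0∞) :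
    lnorm (((d : ℝ) + 1) / d) (fun j => f j * g j ^ (d - 1)) ≤
      lnorm ((d : ℝ) + 1) f * lnorm ((d : ℝ) + 1) g ^ (d - 1) := by
  let _ : MeasurableSpace α := ⊤
  have hd1 : (1 : ℝ) ≤ d := by exact_mod_cast hd
  have hd' : (0 : ℝ) < d := by linarith
  have hs : (0 : ℝ) ≤ (d - 1) / d := div_nonneg (by linarith) hd'.le
  have := ENNReal.lintegral_mul_norm_pow_le (μ := MeasureTheory.Measure.count)
    (f := fun j => f j ^ ((d : ℝ) + 1)) (g := fun j => g j ^ ((d : ℝ) + 1))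
    measurable_from_top.aemeasurable measurable_from_top.aemeasurable
    (p := 1 / d) (q := (d - 1) / d) (by positivity) hs (by field_simp; ring)
  simp only [MeasureTheory.lintegral_count] at this
  have e1 : 0 ≤ 1 / (((d : ℝ) + 1) / d) := by positivity
  have := ENNReal.rpow_le_rpow this e1
  refine (le_of_eq ?_).trans (this.trans (le_of_eq ?_))
  · unfold lnorm
    congr 2; ext j
    rw [ENNReal.mul_rpow_of_nonneg _ _ (by positivity)]
    simp only [← ENNReal.rpow_natCast, ← ENNReal.rpow_mul, Nat.cast_sub hd, Nat.cast_one]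
    congr 2 <;> field_simp
  · unfold lnorm
    rw [ENNReal.mul_rpow_of_nonneg _ _ e1]
    simp only [← ENNReal.rpow_natCast, ← ENNReal.rpow_mul, Nat.cast_sub hd, Nat.cast_one]
    congr 2 <;> field_simp

/-- The pointwise maximum of two elements of the `ℓ^{d+1}` ball of radius `c` has norm at most
`2^{1/(d+1)} c`, so its `(d - 1)`-st power loses at most a factor `2`. -/
lemma lnorm_max_pow_le {d : ℕ} (hd : 1 ≤ d) (f g : α → ℝ≥0∞) (c : ℝ≥0∞)
    (hf : lnorm ((d : ℝ) + 1) f ≤ c) (hg : lnorm ((d : ℝ) + 1) g ≤ c) :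
    lnorm ((d : ℝ) + 1) (fun j => max (f j) (g j)) ^ (d - 1) ≤ 2 * c ^ (d - 1) := by
  have hd1 : (1 : ℝ) ≤ d := by exact_mod_cast hd
  have hp : (0 : ℝ) < (d : ℝ) + 1 := by positivity
  have h1 : ∑' j, max (f j) (g j) ^ ((d : ℝ) + 1) ≤ 2 * c ^ ((d : ℝ) + 1) := by
    calc ∑' j, max (f j) (g j) ^ ((d : ℝ) + 1)
        ≤ ∑' j, (f j ^ ((d : ℝ) + 1) + g j ^ ((d : ℝ) + 1)) := by
          gcongr with j
          rcases max_cases (f j) (g j) with h | h <;> rw [h.1]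
          · exact le_self_add
          · exact le_add_self
      _ = lnorm ((d : ℝ) + 1) f ^ ((d : ℝ) + 1) + lnorm ((d : ℝ) + 1) g ^ ((d : ℝ) + 1) := by
          rw [ENNReal.tsum_add, lnorm_rpow hp, lnorm_rpow hp]
      _ ≤ c ^ ((d : ℝ) + 1) + c ^ ((d : ℝ) + 1) := by gcongr
      _ = _ := by rw [two_mul]
  have e : (0 : ℝ) ≤ ((d - 1 : ℕ) : ℝ) / (d + 1) := by positivity
  calc lnorm ((d : ℝ) + 1) (fun j => max (f j) (g j)) ^ (d - 1)
      = (∑' j, max (f j) (g j) ^ ((d : ℝ) + 1)) ^ (((d - 1 : ℕ) : ℝ) / (d + 1)) := by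
        rw [lnorm, ← ENNReal.rpow_natCast, ← ENNReal.rpow_mul]
        congr 1; field_simp
    _ ≤ (2 * c ^ ((d : ℝ) + 1)) ^ (((d - 1 : ℕ) : ℝ) / (d + 1)) := by gcongr
    _ = 2 ^ (((d - 1 : ℕ) : ℝ) / (d + 1)) * c ^ (d - 1) := by
        rw [ENNReal.mul_rpow_of_nonneg _ _ e, ← ENNReal.rpow_mul, ← ENNReal.rpow_natCast]
        congr 2; field_simp
    _ ≤ 2 ^ (1 : ℝ) * c ^ (d - 1) := by
        gcongr
        · norm_num
        · rw [div_le_one hp, Nat.cast_sub hd]; push_cast; linarith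
    _ = _ := by rw [ENNReal.rpow_one]

end General

/-! ### Young's convolution inequality -/

/-- Pointwise form of Young's inequality: three-factor Hölder applied to
`K a = (K^q a^r)^{1/(d+1)} (K^q)^{1/(d+1)} (a^r)^{(d-1)/(d+1)}` with `q = (d+1)/2`, `r = (d+1)/d`. -/
lemma tsum_mul_rpow_le {α : Type*} {d : ℕ} (hd : 1 ≤ d) (K a : α → ℝ≥0∞) :
    (∑' j, K j * a j) ^ ((d : ℝ) + 1) ≤
      (∑' j, K j ^ (((d : ℝ) + 1) / 2) * a j ^ (((d : ℝ) + 1) / d)) *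
        (∑' j, K j ^ (((d : ℝ) + 1) / 2)) *
          (∑' j, a j ^ (((d : ℝ) + 1) / d)) ^ ((d : ℝ) - 1) := by
  let _ : MeasurableSpace α := ⊤
  have hd1 : (1 : ℝ) ≤ d := by exact_mod_cast hd
  have hd' : (0 : ℝ) < d := by linarith
  have hp : (0 : ℝ) < (d : ℝ) + 1 := by positivity
  have hs : (0 : ℝ) ≤ (d - 1) / (d + 1) := div_nonneg (by linarith) hp.le
  have hi : (0 : ℝ) ≤ 1 / (d + 1) := by positivity
  have := ENNReal.lintegral_prod_norm_pow_le (μ := MeasureTheory.Measure.count)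
    (Finset.univ : Finset (Fin 3))
    (f := ![fun j => K j ^ (((d : ℝ) + 1) / 2) * a j ^ (((d : ℝ) + 1) / d),
      fun j => K j ^ (((d : ℝ) + 1) / 2), fun j => a j ^ (((d : ℝ) + 1) / d)])
    (fun i _ => measurable_from_top.aemeasurable)
    (p := ![1 / ((d : ℝ) + 1), 1 / ((d : ℝ) + 1), ((d : ℝ) - 1) / (d + 1)])
    (by simp [Fin.sum_univ_three]; field_simp; ring)
    (by intro i _; fin_cases i <;> simp [hs] <;> positivity)
  simp only [MeasureTheory.lintegral_count, Fin.prod_univ_three, Matrix.cons_val_zero,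
    Matrix.cons_val_one, Matrix.cons_val] at this
  have h2 := ENNReal.rpow_le_rpow this hp.le
  refine (le_of_eq ?_).trans (h2.trans (le_of_eq ?_))
  · congr 2; ext j
    rw [ENNReal.mul_rpow_of_nonneg _ _ hi]
    simp only [← ENNReal.rpow_mul]
    have e1 : K j = K j ^ (((d : ℝ) + 1) / 2 * (1 / (d + 1))) *
        K j ^ (((d : ℝ) + 1) / 2 * (1 / (d + 1))) := by
      rw [← ENNReal.rpow_add_of_nonneg _ _ (by positivity) (by positivity)]
      conv_lhs => rw [← ENNReal.rpow_one (K j)]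
      congr 1; field_simp; norm_num
    have e2 : a j = a j ^ (((d : ℝ) + 1) / d * (1 / (d + 1))) *
        a j ^ (((d : ℝ) + 1) / d * ((d - 1) / (d + 1))) := by
      rw [← ENNReal.rpow_add_of_nonneg _ _ (by positivity) (by positivity)]
      conv_lhs => rw [← ENNReal.rpow_one (a j)]
      congr 1; field_simp; ring
    conv_lhs => rw [e1, e2]
    ring
  · rw [ENNReal.mul_rpow_of_nonneg _ _ hp.le, ENNReal.mul_rpow_of_nonneg _ _ hp.le]
    simp only [← ENNReal.rpow_mul]
    rw [one_div_mul_cancel hp.ne', div_mul_cancel₀ _ hp.ne']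
    simp

/-- Young's convolution inequality on the punctured lattice, with exponents `(d+1)/2` and
`(d+1)/d` on the right and `d+1` on the left. -/
lemma young {k d : ℕ} (hd : 1 ≤ d) (Q : ZkL k → ℝ≥0∞) (a : ZkP k → ℝ≥0∞) :
    lnorm ((d : ℝ) + 1) (fun i : ZkP k => ∑' j : ZkP k, Q (i.1 - j.1) * a j) ≤
      lnorm (((d : ℝ) + 1) / 2) Q * lnorm (((d : ℝ) + 1) / d) a := by
  have hd1 : (1 : ℝ) ≤ d := by exact_mod_cast hd
  have hd' : (0 : ℝ) < d := by linarith
  have hp : (0 : ℝ) < (d : ℝ) + 1 := by positivity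
  set G : ℝ≥0∞ := ∑' j, Q j ^ (((d : ℝ) + 1) / 2) with hG
  set A : ℝ≥0∞ := ∑' j, a j ^ (((d : ℝ) + 1) / d) with hA
  have inj1 : ∀ i : ZkP k, Function.Injective fun j : ZkP k => i.1 - j.1 := fun i j j' h =>
    Subtype.ext (sub_right_injective h)
  have inj2 : ∀ j : ZkP k, Function.Injective fun i : ZkP k => i.1 - j.1 := fun j i i' h =>
    Subtype.ext (sub_left_injective h)
  have key : ∑' i : ZkP k, (∑' j : ZkP k, Q (i.1 - j.1) * a j) ^ ((d : ℝ) + 1) ≤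
      (A * G) * G * A ^ ((d : ℝ) - 1) := by
    calc _ ≤ ∑' i : ZkP k, (∑' j : ZkP k, Q (i.1 - j.1) ^ (((d : ℝ) + 1) / 2) *
            a j ^ (((d : ℝ) + 1) / d)) * G * A ^ ((d : ℝ) - 1) := by
          refine ENNReal.tsum_le_tsum fun i => ?_
          refine (tsum_mul_rpow_le hd (fun j : ZkP k => Q (i.1 - j.1)) a).trans ?_
          gcongr
          exact ENNReal.tsum_comp_le_tsum_of_injective (inj1 i)
            fun j => Q j ^ (((d : ℝ) + 1) / 2)
      _ = (∑' j : ZkP k, (∑' i : ZkP k, Q (i.1 - j.1) ^ (((d : ℝ) + 1) / 2)) *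
            a j ^ (((d : ℝ) + 1) / d)) * G * A ^ ((d : ℝ) - 1) := by
          rw [ENNReal.tsum_mul_right, ENNReal.tsum_mul_right, ENNReal.tsum_comm]
          simp only [ENNReal.tsum_mul_right]
      _ ≤ (∑' j : ZkP k, G * a j ^ (((d : ℝ) + 1) / d)) * G * A ^ ((d : ℝ) - 1) := by
          gcongr with j
          exact ENNReal.tsum_comp_le_tsum_of_injective (inj2 j)
            fun j => Q j ^ (((d : ℝ) + 1) / 2)
      _ = _ := by rw [ENNReal.tsum_mul_left, mul_comm G]
  have e : (A * G) * G * A ^ ((d : ℝ) - 1) = G ^ (2 : ℝ) * A ^ (d : ℝ) := by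
    have : A ^ (d : ℝ) = A * A ^ ((d : ℝ) - 1) := by
      conv_rhs => rw [← ENNReal.rpow_one A, ← ENNReal.rpow_mul, one_mul]
      rw [← ENNReal.rpow_add_of_nonneg _ _ zero_le_one (by linarith)]
      congr 1; ring
    rw [this, ENNReal.rpow_two]; ring
  rw [e] at key
  have hi : (0 : ℝ) ≤ 1 / (d + 1) := by positivity
  refine (ENNReal.rpow_le_rpow key hi).trans (le_of_eq ?_)
  rw [ENNReal.mul_rpow_of_nonneg _ _ hi, ← ENNReal.rpow_mul, ← ENNReal.rpow_mul, lnorm, lnorm]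
  congr 2 <;> field_simp

/-! ### Elementary estimates and the Lipschitz bound -/

lemma summable_of_tsum_enorm_ne_top {α : Type*} {f : α → ℝ} (h : ∑' j, ‖f j‖ₑ ≠ ∞) :
    Summable f := by
  have := ENNReal.summable_toReal h
  simp only [toReal_enorm] at this
  exact this.of_norm

/-- Splitting of a difference of quotients `N/M - N'/M'` as
`(N - N')/M - (N'/M') (M - M')/M`, with denominators at least `1`. -/
lemma enorm_div_sub_div_le {N N' M M' : ℝ} (hM : 1 ≤ M) (hM' : 1 ≤ M') :
    ‖N / M - N' / M'‖ₑ ≤ ‖N - N'‖ₑ + ‖N' / M'‖ₑ * ‖M - M'‖ₑ := by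
  have e : N / M - N' / M' = ((N - N') + -(N' / M' * (M - M'))) * M⁻¹ := by
    field_simp
    ring
  have h1 : ‖M⁻¹‖ₑ ≤ 1 := by
    rw [Real.enorm_eq_ofReal_abs, ENNReal.ofReal_le_one, abs_of_nonneg (by positivity)]
    exact inv_le_one_of_one_le₀ hM
  rw [e, enorm_mul, ← enorm_mul (N' / M') (M - M'), ← enorm_neg (N' / M' * (M - M'))]
  exact (mul_le_of_le_one_right' h1).trans (enorm_add_le _ _)

lemma enorm_pow_sub_pow_le (d : ℕ) (a b : ℝ) :
    ‖a ^ d - b ^ d‖ₑ ≤ ‖a - b‖ₑ * max ‖a‖ₑ ‖b‖ₑ ^ (d - 1) * d := by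
  have h := ENNReal.ofReal_le_ofReal (abs_pow_sub_pow_le a b d)
  refine (Real.enorm_eq_ofReal_abs _).le.trans (h.trans (le_of_eq ?_))
  rw [ENNReal.ofReal_mul (by positivity), ENNReal.ofReal_mul (by positivity),
    ENNReal.ofReal_pow (by positivity), ENNReal.ofReal_max, ENNReal.ofReal_natCast]
  simp only [Real.enorm_eq_ofReal_abs]
  ring

/-- Proposition 2.8, part 2: Lipschitz continuity of `T` on the invariant ball.
With `γ := ‖Q‖_{(d+1)/2,ℤ^k}` and `δ := ‖Q‖_{d+1,ℤ^k∖{0}}` finite, if `ε > 0` satisfies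
`δ + γ ε^d ≤ ε`, then for all `x, y ∈ B_ε(0) ∩ D`,
`‖T(x) − T(y)‖_{d+1} ≤ 2d(γ ε^{d−1} + δ ε^d) ‖x − y‖_{d+1}`. -/
theorem stmt3 (k d : ℕ) (hk : 1 ≤ k) (hd : 2 ≤ d)
    (Q : ZkL k → ℝ) (hQpos : ∀ j, 0 < Q j) (hQ0 : Q 0 = 1)
    (hsum1 : Summable fun j : ZkL k => |Q j| ^ (((d : ℝ) + 1) / 2))
    (hsum2 : Summable fun j : ZkP k => |Q j.1| ^ ((d : ℝ) + 1))
    (ε : ℝ) (hε : 0 < ε)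
    (hball : del k d Q + gam k d Q * ε ^ d ≤ ε)
    (x y : ZkP k → ℝ) (hx : memD k d x) (hy : memD k d y)
    (hxb : norm0 k ((d : ℝ) + 1) x ≤ ε) (hyb : norm0 k ((d : ℝ) + 1) y ≤ ε) :
    norm0 k ((d : ℝ) + 1) (fun i : ZkP k => opT k d Q x i.1 - opT k d Q y i.1) ≤
      2 * d * (gam k d Q * ε ^ (d - 1) + del k d Q * ε ^ d) *
        norm0 k ((d : ℝ) + 1) (fun i : ZkP k => x i - y i) := by
  have hd1 : 1 ≤ d := by omega
  have hd1' : (1 : ℝ) ≤ d := by exact_mod_cast hd1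
  have hp : (0 : ℝ) < (d : ℝ) + 1 := by positivity
  have hp1 : (1 : ℝ) ≤ (d : ℝ) + 1 := by linarith
  have hq : (0 : ℝ) < ((d : ℝ) + 1) / 2 := by positivity
  have hr : (0 : ℝ) < ((d : ℝ) + 1) / d := by positivity
  set γ : ℝ≥0∞ := lnorm (((d : ℝ) + 1) / 2) (fun j : ZkL k => ‖Q j‖ₑ) with hγ
  set δ : ℝ≥0∞ := lnorm ((d : ℝ) + 1) (fun j : ZkP k => ‖Q j.1‖ₑ) with hδ
  set Δ : ℝ≥0∞ := lnorm ((d : ℝ) + 1) (fun j : ZkP k => ‖x j - y j‖ₑ) with hΔ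
  set e : ℝ≥0∞ := ENNReal.ofReal ε with he
  have γR : γ.toReal = gam k d Q := toReal_lnorm hq _
  have δR : δ.toReal = del k d Q := toReal_lnorm hp _
  have ΔR : Δ.toReal = norm0 k ((d : ℝ) + 1) (fun i : ZkP k => x i - y i) := toReal_lnorm hp _
  have eR : e.toReal = ε := ENNReal.toReal_ofReal hε.le
  have γt : γ ≠ ∞ := lnorm_ne_top hq hsum1
  have δt : δ ≠ ∞ := lnorm_ne_top hp hsum2
  have et : e ≠ ∞ := ENNReal.ofReal_ne_top
  have ball : ∀ z : ZkP k → ℝ, memD k d z → norm0 k ((d : ℝ) + 1) z ≤ ε →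
      lnorm ((d : ℝ) + 1) (fun j => ‖z j‖ₑ) ≤ e := by
    intro z hz hzb
    rw [← ENNReal.toReal_le_toReal (lnorm_ne_top hp hz.1) et, eR, toReal_lnorm hp]
    exact hzb
  have hxe := ball x hx hxb
  have hye := ball y hy hyb
  have hball' : δ + γ * e ^ d ≤ e := by
    have h1 : γ * e ^ d ≠ ∞ := ENNReal.mul_ne_top γt (ENNReal.pow_ne_top et)
    rw [← ENNReal.toReal_le_toReal (ENNReal.add_ne_top.2 ⟨δt, h1⟩) et,
      ENNReal.toReal_add δt h1, ENNReal.toReal_mul, ENNReal.toReal_pow, γR, δR, eR]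
    exact hball
  have Δt : Δ ≠ ∞ := by
    refine ne_top_of_le_ne_top (ENNReal.add_ne_top.2 ⟨et, et⟩) (b := e + e) ?_
    calc Δ ≤ lnorm ((d : ℝ) + 1) (fun j : ZkP k => ‖x j‖ₑ + ‖y j‖ₑ) :=
          lnorm_mono hp.le fun j => enorm_sub_le
      _ ≤ _ := (lnorm_add_le hp1 _ _).trans (add_le_add hxe hye)
  -- Bounds on numerators and denominators of `T z` for `z` in the ball.
  have conv : ∀ z : ZkP k → ℝ, lnorm ((d : ℝ) + 1) (fun j => ‖z j‖ₑ) ≤ e →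
      lnorm ((d : ℝ) + 1) (fun i : ZkP k => ∑' j : ZkP k, ‖Q (i.1 - j.1) * z j ^ d‖ₑ) ≤
        γ * e ^ d := by
    intro z hz
    simp only [enorm_mul, enorm_pow]
    refine (young hd1 (fun j => ‖Q j‖ₑ) fun j => ‖z j‖ₑ ^ d).trans ?_
    rw [lnorm_pow hd1]
    gcongr
  have sumN : ∀ z : ZkP k → ℝ, lnorm ((d : ℝ) + 1) (fun j => ‖z j‖ₑ) ≤ e → ∀ i : ZkP k,
      Summable fun j : ZkP k => Q (i.1 - j.1) * z j ^ d := by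
    intro z hz i
    refine summable_of_tsum_enorm_ne_top (ne_top_of_le_ne_top
      (ENNReal.mul_ne_top γt (ENNReal.pow_ne_top et)) (le_trans ?_ (conv z hz)))
    exact le_lnorm hp (fun i : ZkP k => ∑' j : ZkP k, ‖Q (i.1 - j.1) * z j ^ d‖ₑ) i
  have sumM : ∀ z : ZkP k → ℝ, lnorm ((d : ℝ) + 1) (fun j => ‖z j‖ₑ) ≤ e →
      Summable fun j : ZkP k => Q j.1 * z j ^ d := by
    intro z hz
    refine summable_of_tsum_enorm_ne_top (ne_top_of_le_ne_top
      (ENNReal.mul_ne_top δt (ENNReal.pow_ne_top (n := d) et)) ?_)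
    simp only [enorm_mul, enorm_pow]
    refine (tsum_mul_le_lnorm hd1' (fun j : ZkP k => ‖Q j.1‖ₑ) fun j => ‖z j‖ₑ ^ d).trans ?_
    rw [lnorm_pow hd1]
    gcongr
  have oneM : ∀ z : ZkP k → ℝ, memD k d z → 1 ≤ 1 + ∑' j : ZkP k, Q j.1 * z j ^ d := by
    intro z hz
    have : 0 ≤ ∑' j : ZkP k, Q j.1 * z j ^ d :=
      tsum_nonneg fun j => mul_nonneg (hQpos _).le (pow_nonneg (hz.2 j) _)
    linarith
  -- Invariance of the ball: `‖T y‖ ≤ δ + γ ε^d ≤ ε`.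
  have Ty : lnorm ((d : ℝ) + 1) (fun i : ZkP k => ‖opT k d Q y i.1‖ₑ) ≤ e := by
    refine le_trans ?_ hball'
    refine le_trans ?_ (add_le_add_right (conv y hye) δ)
    refine le_trans (lnorm_mono hp.le fun i => ?_) (lnorm_add_le hp1 _ _)
    have h0 := oneM y hy
    have h1 : ‖(1 + ∑' j : ZkP k, Q j.1 * y j ^ d)⁻¹‖ₑ ≤ 1 := by
      rw [Real.enorm_eq_ofReal_abs, ENNReal.ofReal_le_one, abs_of_nonneg (by positivity)]
      exact inv_le_one_of_one_le₀ h0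
    rw [opT, div_eq_mul_inv, enorm_mul]
    refine (mul_le_of_le_one_right' h1).trans ((enorm_add_le _ _).trans ?_)
    gcongr
    exact enorm_tsum_le_tsum_enorm
  set a : ZkP k → ℝ≥0∞ := fun j => ‖x j ^ d - y j ^ d‖ₑ with ha
  have hA : lnorm (((d : ℝ) + 1) / d) a ≤ Δ * (2 * e ^ (d - 1)) * d := by
    refine (lnorm_mono hr.le fun j => enorm_pow_sub_pow_le d (x j) (y j)).trans ?_
    rw [lnorm_mul_const hr]
    gcongr
    refine (lnorm_mul_pow_le hd1 _ _).trans ?_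
    gcongr
    exact lnorm_max_pow_le hd1 _ _ e hxe hye
  have hS : ∑' j : ZkP k, ‖Q j.1‖ₑ * a j ≤ δ * lnorm (((d : ℝ) + 1) / d) a :=
    tsum_mul_le_lnorm hd1' _ _
  have point : ∀ i : ZkP k, ‖opT k d Q x i.1 - opT k d Q y i.1‖ₑ ≤
      (∑' j : ZkP k, ‖Q (i.1 - j.1)‖ₑ * a j) +
        ‖opT k d Q y i.1‖ₑ * ∑' j : ZkP k, ‖Q j.1‖ₑ * a j := by
    intro i
    refine (enorm_div_sub_div_le (oneM x hx) (oneM y hy)).trans ?_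
    rw [add_sub_add_left_eq_sub, add_sub_add_left_eq_sub,
      ← (sumN x hxe i).tsum_sub (sumN y hye i), ← (sumM x hxe).tsum_sub (sumM y hye)]
    simp only [← mul_sub]
    refine add_le_add ?_ (mul_le_mul_right ?_ _)
    · refine enorm_tsum_le_tsum_enorm.trans (le_of_eq ?_)
      simp only [enorm_mul, ha]
    · refine enorm_tsum_le_tsum_enorm.trans (le_of_eq ?_)
      simp only [enorm_mul, ha]
  have main : lnorm ((d : ℝ) + 1) (fun i : ZkP k => ‖opT k d Q x i.1 - opT k d Q y i.1‖ₑ) ≤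
      2 * d * (γ * e ^ (d - 1) + δ * e ^ d) * Δ := by
    calc _ ≤ γ * lnorm (((d : ℝ) + 1) / d) a + e * (δ * lnorm (((d : ℝ) + 1) / d) a) := by
          refine (lnorm_mono hp.le point).trans ((lnorm_add_le hp1 _ _).trans ?_)
          rw [lnorm_mul_const hp]
          exact add_le_add (young hd1 (fun j => ‖Q j‖ₑ) a) (mul_le_mul' Ty hS)
      _ ≤ γ * (Δ * (2 * e ^ (d - 1)) * d) + e * (δ * (Δ * (2 * e ^ (d - 1)) * d)) := by gcongr
      _ = _ := by
          have : e ^ d = e * e ^ (d - 1) := by rw [← pow_succ']; congr 1; omega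
          rw [this]; ring
  have fin : 2 * (d : ℝ≥0∞) * (γ * e ^ (d - 1) + δ * e ^ d) * Δ ≠ ∞ := by
    have := ENNReal.mul_ne_top γt (ENNReal.pow_ne_top (n := d - 1) et)
    have := ENNReal.mul_ne_top δt (ENNReal.pow_ne_top (n := d) et)
    finiteness
  have := ENNReal.toReal_mono fin main
  rw [toReal_lnorm hp, ENNReal.toReal_mul, ENNReal.toReal_mul, ENNReal.toReal_add
    (ENNReal.mul_ne_top γt (ENNReal.pow_ne_top et)) (ENNReal.mul_ne_top δt (ENNReal.pow_ne_top et))]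
    at this
  simpa only [ENNReal.toReal_mul, ENNReal.toReal_pow, γR, δR, ΔR, eR, ENNReal.toReal_natCast,
    ENNReal.toReal_ofNat, norm0] using this
end
end

section
/- Quartic characterization of the good set on the binary tree (Proposition 4.1): Let d = 2. For every pair (γ, δ) ∈ (1,∞) × (0,∞), one has (γ, δ) ∈ G_2 if and only if 16γ²δ⁴ + 24γ³δ² + (16γ⁵ − 4γ²)δ − 3γ⁴ < 0. -/
/-!
Write `f(ε) = γε² - ε + δ` and `g(ε) = 4δε² + 4γε - 1`, so that membership asks for `ε > 0` with
`f(ε) ≤ 0` and `g(ε) < 0`. As `g` increases on `(0,∞)`, the best choice of `ε` is the smaller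
root `x` of `f`. The larger root `y ≥ 1/(2γ)` always has `g(y) > 0`, hence the sign of `g(x)` is
that of `g(x) g(y)`, which up to a positive factor is the resultant of `f` and `g`. This resultant
is `(γ + 4δ²)² - 4(γ² + δ)(1 - 4γδ)`, the quartic divided by `γ²`; its negativity forces the
discriminant `1 - 4γδ` of `f` to be positive.
-/

open scoped BigOperators

noncomputable section

/-- The two roots `x ≤ y` of `γε² - ε + δ`, given by Vieta's relations. -/
lemma exists_roots (γ δ : ℝ) (hγ : 1 < γ) (hδ : 0 < δ) (hD : 0 ≤ 1 - 4 * γ * δ) :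
    ∃ x y : ℝ, 0 < x ∧ x ≤ y ∧ γ * (x + y) = 1 ∧ γ * (x * y) = δ := by
  have hs := Real.sq_sqrt hD
  have hs0 := Real.sqrt_nonneg (1 - 4 * γ * δ)
  set s := Real.sqrt (1 - 4 * γ * δ)
  have hg : 0 < γ := by linarith
  have hs1 : s < 1 := by nlinarith [mul_pos hg hδ]
  refine ⟨(1 - s) / (2 * γ), (1 + s) / (2 * γ), div_pos (by linarith) (by linarith), ?_, ?_, ?_⟩
  · gcongr
    linarith
  · field_simp
    ring
  · field_simp
    linear_combination -hs

/-- The product formula for the resultant: the values of `4δε² + 4γε - 1` at the two roots of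
`γε² - ε + δ` multiply to the resultant divided by `γ²`. -/
lemma resultant_eq (γ δ x y : ℝ) (hγ : 0 < γ) (h1 : γ * (x + y) = 1) (h2 : γ * (x * y) = δ) :
    γ ^ 2 * ((4 * δ * x ^ 2 + 4 * γ * x - 1) * (4 * δ * y ^ 2 + 4 * γ * y - 1)) =
      (γ + 4 * δ ^ 2) ^ 2 - 4 * (γ ^ 2 + δ) * (1 - 4 * γ * δ) := by
  have hx : γ * x ^ 2 = x - δ := by linear_combination x * h1 - h2
  have hy : γ * y ^ 2 = y - δ := by linear_combination y * h1 - h2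
  -- Reducing modulo the root equation makes both factors affine.
  have gx : γ * (4 * δ * x ^ 2 + 4 * γ * x - 1) = 4 * (γ ^ 2 + δ) * x - (γ + 4 * δ ^ 2) := by
    linear_combination 4 * δ * hx
  have gy : γ * (4 * δ * y ^ 2 + 4 * γ * y - 1) = 4 * (γ ^ 2 + δ) * y - (γ + 4 * δ ^ 2) := by
    linear_combination 4 * δ * hy
  have e : γ ^ 2 * ((4 * δ * x ^ 2 + 4 * γ * x - 1) * (4 * δ * y ^ 2 + 4 * γ * y - 1)) =
      (4 * (γ ^ 2 + δ) * x - (γ + 4 * δ ^ 2)) * (4 * (γ ^ 2 + δ) * y - (γ + 4 * δ ^ 2)) := by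
    rw [← gx, ← gy]
    ring
  rw [e]
  apply mul_left_cancel₀ hγ.ne'
  linear_combination
    (4 * (γ ^ 2 + δ)) ^ 2 * h2 - 4 * (γ ^ 2 + δ) * (γ + 4 * δ ^ 2) * h1

/-- Proposition 4.1: quartic characterization of the good set on the
binary tree. For `(γ, δ) ∈ (1,∞) × (0,∞)`, `(γ, δ) ∈ G_2` iff
`16γ²δ⁴ + 24γ³δ² + (16γ⁵ − 4γ²)δ − 3γ⁴ < 0`. -/
theorem stmt8 (γ δ : ℝ) (hγ : 1 < γ) (hδ : 0 < δ) :
    (γ, δ) ∈ goodSet 2 ↔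
      16 * γ ^ 2 * δ ^ 4 + 24 * γ ^ 3 * δ ^ 2 + (16 * γ ^ 5 - 4 * γ ^ 2) * δ
        - 3 * γ ^ 4 < 0 := by
  have hg : 0 < γ := by linarith
  have hfac : 16 * γ ^ 2 * δ ^ 4 + 24 * γ ^ 3 * δ ^ 2 + (16 * γ ^ 5 - 4 * γ ^ 2) * δ - 3 * γ ^ 4 =
      γ ^ 2 * ((γ + 4 * δ ^ 2) ^ 2 - 4 * (γ ^ 2 + δ) * (1 - 4 * γ * δ)) := by ring
  have hg2 : 0 < γ ^ 2 := by positivity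
  rw [hfac]
  constructor
  · rintro ⟨-, -, ε, hε, hf, hgε⟩
    norm_num at hf hgε
    have hD : 0 ≤ 1 - 4 * γ * δ := by
      nlinarith [sq_nonneg (2 * γ * ε - 1), mul_le_mul_of_nonneg_left hf hg.le]
    obtain ⟨x, y, hx, hxy, h1, h2⟩ := exists_roots γ δ hγ hδ hD
    have hxε : x ≤ ε := by
      by_contra! h
      have : 0 < γ * ((x - ε) * (y - ε)) :=
        mul_pos hg (mul_pos (by linarith) (by linarith))
      nlinarith
    have hgx : 4 * δ * x ^ 2 + 4 * γ * x - 1 < 0 := by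
      have : 4 * δ * x ^ 2 ≤ 4 * δ * ε ^ 2 := by gcongr
      have : 4 * γ * x ≤ 4 * γ * ε := by gcongr
      linarith
    have hgy : 0 < 4 * δ * y ^ 2 + 4 * γ * y - 1 := by
      have : γ * x ≤ γ * y := by gcongr
      have : 0 ≤ 4 * δ * y ^ 2 := by positivity
      linarith
    rw [← resultant_eq γ δ x y hg h1 h2]
    exact mul_neg_of_pos_of_neg hg2
      (mul_neg_of_pos_of_neg hg2 (mul_neg_of_neg_of_pos hgx hgy))
  · intro h
    have hR := (pos_iff_neg_of_mul_neg h).1 hg2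
    have hD : 0 ≤ 1 - 4 * γ * δ := by
      by_contra! hneg
      have : 4 * (γ ^ 2 + δ) * (1 - 4 * γ * δ) < 0 :=
        mul_neg_of_pos_of_neg (by positivity) hneg
      linarith [sq_nonneg (γ + 4 * δ ^ 2)]
    obtain ⟨x, y, hx, hxy, h1, h2⟩ := exists_roots γ δ hγ hδ hD
    rw [← resultant_eq γ δ x y hg h1 h2] at hR
    have hprod := (pos_iff_neg_of_mul_neg hR).1 hg2
    have hgy : 0 < 4 * δ * y ^ 2 + 4 * γ * y - 1 := by
      have : γ * x ≤ γ * y := by gcongr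
      have : 0 ≤ 4 * δ * y ^ 2 := by positivity
      linarith
    have hgx : 4 * δ * x ^ 2 + 4 * γ * x - 1 < 0 := (neg_iff_pos_of_mul_neg hprod).2 hgy
    refine ⟨hγ, hδ, x, hx, ?_, ?_⟩
    · have : γ * x ^ 2 = x - δ := by linear_combination x * h1 - h2
      simp only
      linarith
    · norm_num
      linarith
end
end

section
/- The boundary curve of the good set G_2 (Proposition 4.1 with its Remark): For every γ > 1, the quartic polynomial p_γ(δ) := 16γ²δ⁴ + 24γ³δ² + (16γ⁵ − 4γ²)δ − 3γ⁴ has exactly one positive real root δ(γ), this root satisfies 0 < δ(γ) ≤ 1/(4γ), and for every δ > 0 one has (γ, δ) ∈ G_2 if and only if δ < δ(γ). In other words, G_2 is exactly the region strictly below the graph of the function γ ↦ δ(γ) on (1,∞). -/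
/-! For `δ ≤ 1/(4γ)` put `f(ε) = γε² - ε + δ` and `g(ε) = 4δε² + 4γε - 1`, and let `ε₁ ≤ ε₂` be the roots
of `f`. The quartic is a multiple of the resultant of `f` and `g`: `p_γ(δ) = γ⁴ g(ε₁) g(ε₂)`
(`quartic_eq_mul`). As `ε₂ ≥ 1/(2γ)`, `g(ε₂) > 0`, so `p_γ(δ) < 0` iff `g(ε₁) < 0`; since `g` increases
on `(0,∞)`, and `f ≤ 0` exactly on `[ε₁, ε₂]`, this says that `(γ, δ) ∈ G_2`
(`mem_goodSet_two_iff`). If `δ > 1/(4γ)`, then `f > 0` everywhere and `p_γ(δ) > 0`, so the same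
equivalence holds. Finally `p_γ` is strictly increasing on `[0,∞)`, negative at `0` and positive at
`1/(4γ)`, so `p_γ(δ) < 0` iff `δ` lies below its unique positive root. -/

open scoped BigOperators

noncomputable section

/-- The quartic `p_γ(δ)` whose positive root bounds `G_2`. -/
def quartic (γ δ : ℝ) : ℝ :=
  16 * γ ^ 2 * δ ^ 4 + 24 * γ ^ 3 * δ ^ 2 + (16 * γ ^ 5 - 4 * γ ^ 2) * δ - 3 * γ ^ 4

lemma quartic_lt {γ a b : ℝ} (hγ : 1 < γ) (ha : 0 ≤ a) (hab : a < b) :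
    quartic γ a < quartic γ b := by
  have h4 : a ^ 4 ≤ b ^ 4 := by gcongr
  have h2 : a ^ 2 ≤ b ^ 2 := by gcongr
  have hc : 0 < 16 * γ ^ 5 - 4 * γ ^ 2 := by
    have : γ ^ 2 < γ ^ 5 := pow_lt_pow_right₀ hγ (by norm_num)
    nlinarith [sq_nonneg γ]
  have e1 : 16 * γ ^ 2 * a ^ 4 ≤ 16 * γ ^ 2 * b ^ 4 := by gcongr
  have e2 : 24 * γ ^ 3 * a ^ 2 ≤ 24 * γ ^ 3 * b ^ 2 := by gcongr
  have e3 := mul_lt_mul_of_pos_left hab hc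
  unfold quartic
  linarith

lemma quartic_endpoint_pos {γ : ℝ} (hγ : 1 < γ) : 0 < quartic γ (1 / (4 * γ)) := by
  have h0 : 0 < γ := by linarith
  have : quartic γ (1 / (4 * γ)) = 1 / (16 * γ ^ 2) + γ / 2 + γ ^ 4 := by
    unfold quartic
    field_simp
    ring
  rw [this]
  positivity

/-- The resultant identity, with the roots of `γε² - ε + δ` written as `(1 ∓ s)/(2γ)`,
`s² = 1 - 4γδ`. -/
lemma quartic_eq_mul {γ δ s : ℝ} (h0 : 0 < γ) (hs : s ^ 2 = 1 - 4 * γ * δ) :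
    quartic γ δ = γ ^ 4 *
      (4 * γ * ((1 - s) / (2 * γ)) + 4 * δ * ((1 - s) / (2 * γ)) ^ 2 - 1) *
      (4 * γ * ((1 + s) / (2 * γ)) + 4 * δ * ((1 + s) / (2 * γ)) ^ 2 - 1) := by
  have hδ : δ = (1 - s ^ 2) / (4 * γ) := by
    field_simp
    linarith
  subst hδ
  unfold quartic
  field_simp
  ring

lemma mem_goodSet_two_iff {γ δ : ℝ} (hγ : 1 < γ) (hδ : 0 < δ) :
    (γ, δ) ∈ goodSet 2 ↔ quartic γ δ < 0 := by
  have h0 : 0 < γ := by linarith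
  have hmem : (γ, δ) ∈ goodSet 2 ↔
      ∃ ε > 0, δ + γ * ε ^ 2 ≤ ε ∧ 4 * γ * ε + 4 * δ * ε ^ 2 < 1 := by
    simp only [goodSet, Set.mem_ofPred_eq, hγ, hδ, true_and]
    norm_num
  -- The sign of the quartic is that of its first factor, because `g(ε₂) ≥ 1`.
  have hsign : ∀ s : ℝ, 0 ≤ s → s ^ 2 = 1 - 4 * γ * δ → (quartic γ δ < 0 ↔
      4 * γ * ((1 - s) / (2 * γ)) + 4 * δ * ((1 - s) / (2 * γ)) ^ 2 < 1) := by
    intro s hs0 hs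
    have hpos : 0 < 4 * γ * ((1 + s) / (2 * γ)) + 4 * δ * ((1 + s) / (2 * γ)) ^ 2 - 1 := by
      have e : 4 * γ * ((1 + s) / (2 * γ)) = 2 * (1 + s) := by
        field_simp
        ring
      have : 0 ≤ 4 * δ * ((1 + s) / (2 * γ)) ^ 2 := by positivity
      linarith
    rw [quartic_eq_mul h0 hs, ← sub_neg (b := (1 : ℝ)), ← neg_pos, ← neg_mul, ← mul_neg,
      mul_pos_iff_of_pos_right hpos, mul_pos_iff_of_pos_left (by positivity), neg_pos]
  rw [hmem]
  constructor
  · rintro ⟨ε, hε, hf, hg⟩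
    have hdisc : 0 ≤ 1 - 4 * γ * δ := by
      nlinarith [sq_nonneg (2 * γ * ε - 1)]
    have hs := Real.sq_sqrt hdisc
    set s := √(1 - 4 * γ * δ)
    have hs0 : 0 ≤ s := Real.sqrt_nonneg _
    have hs1 : s ≤ 1 := by nlinarith [mul_pos h0 hδ]
    rw [hsign s hs0 hs]
    have hle : (1 - s) / (2 * γ) ≤ ε := by
      rw [div_le_iff₀ (by positivity)]
      -- `f(ε) ≤ 0` means `(1 - 2γε)² ≤ s²`.
      have := abs_le.1 <| abs_le_of_sq_le_sq (a := 1 - 2 * γ * ε) (b := s) (by nlinarith) hs0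
      linarith [this.2]
    have hnn : 0 ≤ (1 - s) / (2 * γ) := div_nonneg (by linarith) (by positivity)
    refine lt_of_le_of_lt ?_ hg
    gcongr
  · intro hp
    have hlt : δ < 1 / (4 * γ) := by
      by_contra! hge
      rcases hge.eq_or_lt with h | h
      · have := quartic_endpoint_pos hγ
        rw [h] at this
        linarith
      · linarith [quartic_endpoint_pos hγ, quartic_lt hγ (by positivity) h]
    have hdisc : 0 ≤ 1 - 4 * γ * δ := by
      rw [lt_div_iff₀ (by positivity)] at hlt
      linarith
    have hs := Real.sq_sqrt hdisc
    set s := √(1 - 4 * γ * δ)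
    have hs0 : 0 ≤ s := Real.sqrt_nonneg _
    have hs1 : s < 1 := by nlinarith [mul_pos h0 hδ]
    refine ⟨(1 - s) / (2 * γ), div_pos (by linarith) (by positivity), le_of_eq ?_,
      (hsign s hs0 hs).1 hp⟩
    have hδ' : δ = (1 - s ^ 2) / (4 * γ) := by
      field_simp
      linarith
    calc δ + γ * ((1 - s) / (2 * γ)) ^ 2
        = (1 - s ^ 2) / (4 * γ) + γ * ((1 - s) / (2 * γ)) ^ 2 := by rw [← hδ']
      _ = (1 - s) / (2 * γ) := by
        field_simp
        ring

/-- Proposition 4.1 with its Remark: the boundary curve of `G_2`.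
For every `γ > 1` the quartic `p_γ(δ)` has exactly one positive root `δ(γ)`, it satisfies
`0 < δ(γ) ≤ 1/(4γ)`, and for `δ > 0` one has `(γ, δ) ∈ G_2 ↔ δ < δ(γ)`. -/
theorem stmt9 (γ : ℝ) (hγ : 1 < γ) :
    ∃ δ0 : ℝ, 0 < δ0 ∧
      16 * γ ^ 2 * δ0 ^ 4 + 24 * γ ^ 3 * δ0 ^ 2 + (16 * γ ^ 5 - 4 * γ ^ 2) * δ0
        - 3 * γ ^ 4 = 0 ∧
      (∀ δ' : ℝ, 0 < δ' →
        16 * γ ^ 2 * δ' ^ 4 + 24 * γ ^ 3 * δ' ^ 2 + (16 * γ ^ 5 - 4 * γ ^ 2) * δ'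
          - 3 * γ ^ 4 = 0 → δ' = δ0) ∧
      δ0 ≤ 1 / (4 * γ) ∧
      ∀ δ : ℝ, 0 < δ → ((γ, δ) ∈ goodSet 2 ↔ δ < δ0) := by
  have h0 : 0 < γ := by linarith
  have hz : quartic γ 0 < 0 := by
    have : 0 < γ ^ 4 := by positivity
    unfold quartic
    linarith
  have hcont : ContinuousOn (quartic γ) (Set.Icc 0 (1 / (4 * γ))) := by
    unfold quartic
    fun_prop
  obtain ⟨r, ⟨hr0, hr1⟩, hr⟩ := intermediate_value_Icc (by positivity) hcont
    ⟨hz.le, (quartic_endpoint_pos hγ).le⟩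
  have hrpos : 0 < r := by
    rcases hr0.eq_or_lt with h | h
    · rw [← h] at hr
      linarith
    · exact h
  refine ⟨r, hrpos, hr, ?_, hr1, ?_⟩
  · intro x hx hroot
    change quartic γ x = 0 at hroot
    rcases lt_trichotomy x r with h | h | h
    · linarith [quartic_lt hγ hx.le h]
    · exact h
    · linarith [quartic_lt hγ hrpos.le h]
  · intro δ hδ
    rw [mem_goodSet_two_iff hγ hδ]
    constructor
    · intro hp
      by_contra! h
      rcases h.eq_or_lt with h | h
      · rw [← h] at hp
        linarith
      · linarith [quartic_lt hγ hrpos.le h]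
    · intro h
      linarith [quartic_lt hγ hδ.le h]
end
end

section
/- Asymptotics of the boundary curve of G_2 (Proposition 4.1, series expansion): Let δ(γ) denote the unique positive root of the quartic polynomial p_γ(δ) := 16γ²δ⁴ + 24γ³δ² + (16γ⁵ − 4γ²)δ − 3γ⁴ for γ > 1. Then δ(γ) = 3/(16γ) + O(γ^{−4}) as γ → ∞; that is, there exist constants C > 0 and γ₀ > 1 such that |δ(γ) − 3/(16γ)| ≤ C γ^{−4} for all γ ≥ γ₀. -/
/-!
Put `x = γ δ` and `t = γ ^ 3`. Multiplying `p_γ(δ) = 0` by `γ ^ 2` gives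
`t² (16 x - 3) = 4 t x - 24 t x² - 16 x⁴`. For `t ≥ 1` this forces `0 < x ≤ 1/4`, so the right
side is at most `16 t` in absolute value, i.e. `t |16 x - 3| ≤ 16`. Since
`δ - 3 / (16 γ) = t (16 x - 3) / (16 γ ^ 4)`, the claim holds with `C = 1`.
-/

open scoped BigOperators

noncomputable section

/-- Proposition 4.1, series expansion: asymptotics of the boundary
curve of `G_2`. Any positive root `δ(γ)` of the quartic `p_γ` satisfies
`δ(γ) = 3/(16γ) + O(γ^{−4})`: there are `C > 0` and `γ₀ > 1` with
`|δ(γ) − 3/(16γ)| ≤ C γ^{−4}` for all `γ ≥ γ₀`. -/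
theorem stmt10 :
    ∃ C : ℝ, 0 < C ∧ ∃ γ₀ : ℝ, 1 < γ₀ ∧
      ∀ γ : ℝ, γ₀ ≤ γ → ∀ δ0 : ℝ, 0 < δ0 →
        16 * γ ^ 2 * δ0 ^ 4 + 24 * γ ^ 3 * δ0 ^ 2 + (16 * γ ^ 5 - 4 * γ ^ 2) * δ0
          - 3 * γ ^ 4 = 0 →
        |δ0 - 3 / (16 * γ)| ≤ C / γ ^ 4 := by
  refine ⟨1, one_pos, 2, by norm_num, ?_⟩
  intro γ hγ δ hδ h
  have hγ0 : 0 < γ := by linarith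
  -- In the variables `x = γ δ` and `t = γ ^ 3` the equation no longer involves `γ` and `δ`.
  obtain ⟨x, hx⟩ : ∃ x, x = γ * δ := ⟨_, rfl⟩
  obtain ⟨t, ht⟩ : ∃ t, t = γ ^ 3 := ⟨_, rfl⟩
  have hx0 : 0 < x := hx ▸ mul_pos hγ0 hδ
  have ht1 : 1 ≤ t := ht ▸ one_le_pow₀ (by linarith)
  have ht0 : 0 < t := by linarith
  have key : t * (t * (16 * x - 3)) = 4 * t * x - 24 * t * x ^ 2 - 16 * x ^ 4 := by
    subst hx ht
    linear_combination γ ^ 2 * h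
  have hpos4 : 0 < x ^ 4 := by positivity
  -- Dropping the quadratic and quartic terms, `(16 t² - 4 t) x ≤ 3 t²`, and `4 t ≤ 4 t²`.
  have hx14 : x ≤ 1 / 4 := by
    by_contra! hc
    have h1 : 0 < t * t * (4 * x - 1) := by
      have : 0 < 4 * x - 1 := by linarith
      positivity
    have h2 : 0 ≤ (t - 1) * t * x := by
      have : 0 ≤ t - 1 := by linarith
      positivity
    have h3 : 0 < t * x := by positivity
    have h4 : 0 < t * x ^ 2 := by positivity
    have h5 : 0 ≤ t * t * x - t * x := by linarith
    nlinarith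
  have hx1 : x ≤ 1 := by linarith
  have hx2 : x ^ 2 ≤ x := by nlinarith
  have hx4 : x ^ 4 ≤ x ^ 2 := by nlinarith [sq_nonneg x]
  have up : t * (16 * x - 3) ≤ 16 := by
    refine le_of_mul_le_mul_left ?_ ht0
    rw [key]
    nlinarith [mul_nonneg ht0.le (sub_nonneg.2 hx1), mul_pos ht0 (pow_pos hx0 2)]
  have low : -16 ≤ t * (16 * x - 3) := by
    refine le_of_mul_le_mul_left ?_ ht0
    rw [key]
    have h1 : t * x ^ 2 ≤ t * (1 / 4) := by
      apply mul_le_mul_of_nonneg_left _ ht0.le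
      linarith
    have h2 : 0 < t * x := by positivity
    linarith
  have e : δ - 3 / (16 * γ) = t * (16 * x - 3) / 16 / γ ^ 4 := by
    subst hx ht
    field_simp
  rw [e, abs_div, abs_of_pos (pow_pos hγ0 4)]
  gcongr
  rw [abs_le]
  constructor <;> linarith
end
end
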